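/- Let s ≥ 2, let ψ : [0,1]^{s-1} → ℝ≥0 be measurable with ψ(z) ≤ L for all z (0 < L < ∞), C = ∫_{[0,1]^{s-1}} ψ > 0, A = {z ∈ [0,1]^s : ψ(z_1,…,z_{s-1}) ≥ L z_s}, and assume ∂A admits an (s−1)-dimensional Minkowski content M_A ∈ (0,∞). Then there exists m_0 ∈ ℕ such that for every m ≥ m_0 there exists a point set P = {x_c} ⊆ [0,1)^s with exactly one point in each of the M = m^s grid cubes Q_c = ∏_{j=1}^s [c_j/m,(c_j+1)/m), such that, with N = #(P ∩ A) and y_0,…,y_{N−1} the projections onto the first s−1 coordinates of the points of P ∩ A, the star discrepancy with respect to ψ satisfies D*_{N,ψ}(Y) = sup_{t ∈ [0,1]^{s-1}} |(1/N) Σ_{n=0}^{N−1} 1_{[0,t)}(y_n) − (1/C) ∫_{[0,t)} ψ(z) dz| ≤ (s^{3/4} √(6 M_A) / ((2L)^{1/(2s) − 1/2} C^{1/2 − 1/(2s)})) · √(log N) / N^{1/2 + 1/(2s)} + 2C/(L N). -/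

import Mathlib

open MeasureTheory Set Filter

/-- The half-open anchored box `[0,t) = ∏_j [0, t_j)`. -/
def lowerBox {d : ℕ} (t : Fin d → ℝ) : Set (Fin d → ℝ) :=
  {y | ∀ i, 0 ≤ y i ∧ y i < t i}

/-- The region `A = {z ∈ [0,1]^s : ψ(z_1,…,z_{s-1}) ≥ L z_s}` (with `s = d+1`). -/
def graphRegion {d : ℕ} (ψ : (Fin d → ℝ) → ℝ) (L : ℝ) : Set ((Fin d → ℝ) × ℝ) :=
  {z | z.1 ∈ Icc (0 : Fin d → ℝ) 1 ∧ z.2 ∈ Icc (0 : ℝ) 1 ∧ L * z.2 ≤ ψ z.1}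

/-- The closed Euclidean `ε`-neighborhood of a set `E ⊆ ℝ^{d} × ℝ = ℝ^{d+1}`. -/
def euclNbhdP {d : ℕ} (E : Set ((Fin d → ℝ) × ℝ)) (ε : ℝ) : Set ((Fin d → ℝ) × ℝ) :=
  {x | ∃ y ∈ E, Real.sqrt ((∑ i, (x.1 i - y.1 i) ^ 2) + (x.2 - y.2) ^ 2) ≤ ε}

/-- `∂A` admits the `(s-1)`-dimensional Minkowski content `M` (with `s = d+1`). -/
def HasMinkowskiContentP {d : ℕ} (A : Set ((Fin d → ℝ) × ℝ)) (M : ℝ) : Prop :=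
  Tendsto (fun ε : ℝ => (volume (euclNbhdP (frontier A) ε)).toReal / (2 * ε))
    (nhdsWithin 0 (Set.Ioi 0)) (nhds M)

/-- The grid cube `Q_c = ∏_{j=1}^{d+1} [c_j/m, (c_j+1)/m)` in `[0,1)^{d+1}`, indexed by
`c ∈ {0,…,m-1}^d × {0,…,m-1}`. -/
def gridCubeP {d m : ℕ} (c : (Fin d → Fin m) × Fin m) : Set ((Fin d → ℝ) × ℝ) :=
  {z | (∀ i, (c.1 i : ℝ) / m ≤ z.1 i ∧ z.1 i < ((c.1 i : ℝ) + 1) / m) ∧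
       ((c.2 : ℝ) / m ≤ z.2 ∧ z.2 < ((c.2 : ℝ) + 1) / m)}


open MeasureTheory Set Filter

lemma exists_frontier_of_convex {E : Type*} [NormedAddCommGroup E] [NormedSpace ℝ E]
    {S A : Set E} (hS : Convex ℝ S)
    {x y : E} (hx : x ∈ S) (hxA : x ∈ A) (hy : y ∈ S) (hyA : y ∉ A) :
    ∃ p ∈ S, p ∈ frontier A := by
  by_contra! h
  have hc : IsPreconnected S := hS.isPreconnected
  have key : ∀ p ∈ S, p ∈ interior A ∨ p ∈ interior Aᶜ := by
    intro p hp
    have := h p hp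
    rw [frontier_eq_closure_inter_closure, mem_inter_iff, not_and_or] at this
    rcases this with h1 | h1
    · right
      rw [interior_compl]; exact h1
    · left
      rw [closure_compl] at h1; simpa using h1
  obtain ⟨z, hz, hz1, hz2⟩ := hc (interior A) (interior Aᶜ) isOpen_interior isOpen_interior
    (fun p hp => key p hp)
    ⟨x, hx, (key x hx).resolve_right (fun h => (interior_subset h) hxA)⟩
    ⟨y, hy, (key y hy).resolve_left (fun h => hyA (interior_subset h))⟩
  exact (interior_subset hz2) (interior_subset hz1)

lemma gridCubeP_eq {d m : ℕ} (c : (Fin d → Fin m) × Fin m) :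
    gridCubeP c = (Set.pi univ fun i => Ico ((c.1 i : ℝ) / m) (((c.1 i : ℝ) + 1) / m)) ×ˢ
      Ico ((c.2 : ℝ) / m) (((c.2 : ℝ) + 1) / m) := by
  ext z; simp [gridCubeP, Set.mem_pi]

lemma convex_gridCubeP {d m : ℕ} (c : (Fin d → Fin m) × Fin m) : Convex ℝ (gridCubeP c) := by
  rw [gridCubeP_eq]
  exact (convex_pi fun i _ => convex_Ico _ _).prod (convex_Ico _ _)

lemma measurableSet_gridCubeP {d m : ℕ} (c : (Fin d → Fin m) × Fin m) :
    MeasurableSet (gridCubeP c) := by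
  rw [gridCubeP_eq]
  exact (MeasurableSet.univ_pi fun i => measurableSet_Ico).prod measurableSet_Ico

lemma volume_gridCubeP {d m : ℕ} (c : (Fin d → Fin m) × Fin m) :
    volume (gridCubeP c) = ENNReal.ofReal ((1 / (m : ℝ)) ^ (d + 1)) := by
  rw [gridCubeP_eq, Measure.volume_eq_prod, Measure.prod_prod, volume_pi_pi]
  have : ∀ a : ℝ, (a + 1) / m - a / m = 1 / m := by intro a; ring
  simp only [Real.volume_Ico, this]
  rw [Finset.prod_const, pow_succ, ENNReal.ofReal_mul (by positivity),
    ENNReal.ofReal_pow (by positivity)]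
  simp

lemma gridCubeP_index {m : ℕ} (a b : Fin m) (x : ℝ) (h1 : (a : ℝ) / m ≤ x)
    (h2 : x < ((a : ℝ) + 1) / m) (h3 : (b : ℝ) / m ≤ x) (h4 : x < ((b : ℝ) + 1) / m) : a = b := by
  have hm : (0 : ℝ) < m := by exact_mod_cast a.pos
  rw [div_le_iff₀ hm] at h1 h3
  rw [lt_div_iff₀ hm] at h2 h4
  have h5 : (a : ℝ) < b + 1 := by linarith
  have h6 : (b : ℝ) < a + 1 := by linarith
  have h5' : (a : ℕ) < b + 1 := by exact_mod_cast h5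
  have h6' : (b : ℕ) < a + 1 := by exact_mod_cast h6
  ext; omega

lemma disjoint_gridCubeP {d m : ℕ} :
    Pairwise (Function.onFun Disjoint (gridCubeP : (Fin d → Fin m) × Fin m → _)) := by
  intro c c' hcc
  refine Set.disjoint_left.2 fun z hz hz' => hcc ?_
  refine Prod.ext (funext fun i => ?_) ?_
  · exact gridCubeP_index _ _ _ (hz.1 i).1 (hz.1 i).2 (hz'.1 i).1 (hz'.1 i).2
  · exact gridCubeP_index _ _ _ hz.2.1 hz.2.2 hz'.2.1 hz'.2.2

lemma exists_gridIndex {m : ℕ} (hm : 0 < m) (x : ℝ) (hx : 0 ≤ x) (hx1 : x < 1) :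
    ∃ a : Fin m, (a : ℝ) / m ≤ x ∧ x < ((a : ℝ) + 1) / m := by
  have hm' : (0 : ℝ) < m := by exact_mod_cast hm
  refine ⟨⟨⌊x * m⌋₊, ?_⟩, ?_, ?_⟩
  · rw [Nat.floor_lt (by positivity)]
    nlinarith
  · rw [div_le_iff₀ hm']; exact Nat.floor_le (by positivity)
  · rw [lt_div_iff₀ hm']; exact Nat.lt_floor_add_one _

def unitU (d : ℕ) : Set ((Fin d → ℝ) × ℝ) := (Set.pi univ fun _ => Ico (0 : ℝ) 1) ×ˢ Ico (0 : ℝ) 1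

lemma iUnion_gridCubeP {d m : ℕ} (hm : 0 < m) :
    (⋃ c : (Fin d → Fin m) × Fin m, gridCubeP c) = unitU d := by
  have hm' : (0 : ℝ) < m := by exact_mod_cast hm
  have key : ∀ (a : Fin m) (x : ℝ), (a : ℝ) / m ≤ x → x < ((a : ℝ) + 1) / m → 0 ≤ x ∧ x < 1 := by
    intro a x h1 h2
    refine ⟨le_trans (by positivity) h1, lt_of_lt_of_le h2 ?_⟩
    rw [div_le_one hm']
    exact_mod_cast a.2
  ext z
  simp only [mem_iUnion, unitU, mem_prod, Set.mem_pi, mem_univ, forall_const, mem_Ico]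
  constructor
  · rintro ⟨c, hc⟩
    exact ⟨fun i => key _ _ (hc.1 i).1 (hc.1 i).2, key _ _ hc.2.1 hc.2.2⟩
  · rintro ⟨h1, h2⟩
    choose a ha using fun i => exists_gridIndex hm (z.1 i) (h1 i).1 (h1 i).2
    obtain ⟨b, hb⟩ := exists_gridIndex hm z.2 h2.1 h2.2
    exact ⟨(a, b), ha, hb⟩

lemma card_mul_le_volume {d m : ℕ} (S : Finset ((Fin d → Fin m) × Fin m))
    (B : Set ((Fin d → ℝ) × ℝ)) (hB : volume B ≠ ⊤) (h : ∀ c ∈ S, gridCubeP c ⊆ B) :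
    (S.card : ℝ) * (1 / (m : ℝ)) ^ (d + 1) ≤ (volume B).toReal := by
  have h1 : volume (⋃ c ∈ S, gridCubeP c) ≤ volume B :=
    measure_mono (Set.iUnion₂_subset h)
  rw [measure_biUnion_finset (fun a _ b _ hab => disjoint_gridCubeP hab)
    (fun c _ => measurableSet_gridCubeP c)] at h1
  simp only [volume_gridCubeP, Finset.sum_const, nsmul_eq_mul] at h1
  have := ENNReal.toReal_mono hB h1
  rwa [ENNReal.toReal_mul, ENNReal.toReal_natCast, ENNReal.toReal_ofReal (by positivity)] at this

lemma mem_nbhd {d m : ℕ} (E : Set ((Fin d → ℝ) × ℝ)) (z p : (Fin d → ℝ) × ℝ)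
    (hp : p ∈ E) (h1 : ∀ i, |z.1 i - p.1 i| ≤ 2 / m) (h2 : |z.2 - p.2| ≤ 2 / m) :
    z ∈ euclNbhdP E (2 * Real.sqrt (d + 1) / m) := by
  refine ⟨p, hp, ?_⟩
  apply Real.sqrt_le_iff.2
  refine ⟨by positivity, ?_⟩
  have a1 : ∑ i, (z.1 i - p.1 i) ^ 2 ≤ ∑ i : Fin d, ((2 : ℝ) / m) ^ 2 :=
    Finset.sum_le_sum fun i _ => sq_le_sq.2 (by rw [abs_of_nonneg (by positivity : (0:ℝ) ≤ 2 / m)]; exact h1 i)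
  have a2 : (z.2 - p.2) ^ 2 ≤ ((2 : ℝ) / m) ^ 2 :=
    sq_le_sq.2 (by rw [abs_of_nonneg (by positivity : (0:ℝ) ≤ 2 / m)]; exact h2)
  have a3 : (2 * Real.sqrt (d + 1) / m) ^ 2 = (d + 1) * (2 / m : ℝ) ^ 2 := by
    rw [div_pow, mul_pow, Real.sq_sqrt (by positivity)]; ring
  rw [a3]
  simp only [Finset.sum_const, Finset.card_univ, Fintype.card_fin, nsmul_eq_mul] at a1
  linarith

/-- cubes meeting `A` without being contained in it -/
def bdry {d : ℕ} (m : ℕ) (A : Set ((Fin d → ℝ) × ℝ)) : Set ((Fin d → Fin m) × Fin m) :=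
  {c | (∃ z ∈ gridCubeP c, z ∈ A) ∧ ∃ z ∈ gridCubeP c, z ∉ A}

/-- cubes in `A` cut by the box -/
def cutc {d : ℕ} (m : ℕ) (A : Set ((Fin d → ℝ) × ℝ)) (t : Fin d → ℝ) :
    Set ((Fin d → Fin m) × Fin m) :=
  {c | gridCubeP c ⊆ A ∧ (∀ i, (c.1 i : ℝ) / m < t i) ∧ ∃ i, t i < ((c.1 i : ℝ) + 1) / m}

def nearc {d : ℕ} (m : ℕ) (A : Set ((Fin d → ℝ) × ℝ)) : Set ((Fin d → Fin m) × Fin m) :=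
  {c | gridCubeP c ⊆ euclNbhdP (frontier A) (2 * Real.sqrt (d + 1) / m)}

lemma abs_sub_cube {m a z p u : ℝ} (hm : 0 < m) (h1 : a / m ≤ z) (h2 : z < (a + 1) / m)
    (h3 : a / m ≤ p) (h4 : p ≤ (a + 2) / m) : |z - p| ≤ 2 / m := by
  have e1 : (a + 1) / m = a / m + 1 / m := by ring
  have e2 : (a + 2) / m = a / m + 2 / m := by ring
  have e3 : 1 / m ≤ 2 / m := by gcongr; norm_num
  have e4 : 0 < 1 / m := by positivity
  rw [abs_le]; constructor <;> linarith

lemma bdry_subset_nearc {d m : ℕ} (A : Set ((Fin d → ℝ) × ℝ)) : bdry m A ⊆ nearc m A := by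
  rintro c ⟨⟨x, hx, hxA⟩, y, hy, hyA⟩ z hz
  obtain ⟨p, hp, hpA⟩ := exists_frontier_of_convex (convex_gridCubeP c) hx hxA hy hyA
  have hm : (0 : ℝ) < m := by exact_mod_cast c.2.pos
  refine mem_nbhd _ z p hpA (fun i => ?_) ?_
  · exact abs_sub_cube (u := 0) hm (hz.1 i).1 (hz.1 i).2 (hp.1 i).1
      ((hp.1 i).2.le.trans (by gcongr; norm_num))
  · exact abs_sub_cube (u := 0) hm hz.2.1 hz.2.2 hp.2.1 (hp.2.2.le.trans (by gcongr; norm_num))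

/-- If `Q_c ⊆ A` and the diagonal shift of some point of `Q_c` leaves `A` then `c` is near `∂A`. -/
lemma nearc_of_shift {d m : ℕ} (A : Set ((Fin d → ℝ) × ℝ)) (c : (Fin d → Fin m) × Fin m)
    (x y : (Fin d → ℝ) × ℝ) (hx : x ∈ gridCubeP c) (hxA : x ∈ A)
    (hy1 : ∀ i, y.1 i = x.1 i + 1 / m) (hy2 : y.2 = x.2) (hyA : y ∉ A) : c ∈ nearc m A := by
  intro z hz
  have hm : (0 : ℝ) < m := by exact_mod_cast c.2.pos
  have hc : Convex ℝ ((Set.pi univ fun i => Icc ((c.1 i : ℝ) / m) (((c.1 i : ℝ) + 2) / m)) ×ˢ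
      Icc ((c.2 : ℝ) / m) (((c.2 : ℝ) + 2) / m)) :=
    (convex_pi fun i _ => convex_Icc _ _).prod (convex_Icc _ _)
  have e1 : ∀ a : ℝ, (a + 2) / m = (a + 1) / m + 1 / m := fun a => by ring
  have e4 : 0 < 1 / (m : ℝ) := by positivity
  have hxS : x ∈ ((Set.pi univ fun i => Icc ((c.1 i : ℝ) / m) (((c.1 i : ℝ) + 2) / m)) ×ˢ
      Icc ((c.2 : ℝ) / m) (((c.2 : ℝ) + 2) / m)) := by
    refine ⟨fun i _ => ⟨(hx.1 i).1, ?_⟩, hx.2.1, ?_⟩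
    · rw [e1]; linarith [(hx.1 i).2]
    · rw [e1]; linarith [hx.2.2]
  have hyS : y ∈ ((Set.pi univ fun i => Icc ((c.1 i : ℝ) / m) (((c.1 i : ℝ) + 2) / m)) ×ˢ
      Icc ((c.2 : ℝ) / m) (((c.2 : ℝ) + 2) / m)) := by
    refine ⟨fun i _ => ⟨?_, ?_⟩, ?_, ?_⟩
    · rw [hy1]; linarith [(hx.1 i).1]
    · rw [hy1, e1]; linarith [(hx.1 i).2]
    · rw [hy2]; exact hx.2.1
    · rw [hy2, e1]; linarith [hx.2.2]
  obtain ⟨p, hp, hpA⟩ := exists_frontier_of_convex hc hxS hxA hyS hyA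
  refine mem_nbhd _ z p hpA (fun i => ?_) ?_
  · exact abs_sub_cube (u := 0) hm (hz.1 i).1 (hz.1 i).2 (hp.1 i trivial).1 (hp.1 i trivial).2
  · exact abs_sub_cube (u := 0) hm hz.2.1 hz.2.2 hp.2.1 hp.2.2

lemma cut_shift {d m : ℕ} (hd : 1 ≤ d) (A : Set ((Fin d → ℝ) × ℝ))
    (hA : ∀ z ∈ A, z.1 ∈ Icc (0 : Fin d → ℝ) 1) (c : (Fin d → Fin m) × Fin m)
    (hc : gridCubeP c ⊆ A) :
    ∃ c' ∈ nearc m A, gridCubeP c' ⊆ A ∧ c'.2 = c.2 ∧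
      ∃ k : ℕ, ∀ i, (c'.1 i : ℕ) = c.1 i + k := by
  classical
  have hm : (0 : ℝ) < m := by exact_mod_cast c.2.pos
  let P : ℕ → Prop := fun k => ∃ c' : (Fin d → Fin m) × Fin m, gridCubeP c' ⊆ A ∧ c'.2 = c.2 ∧
    ∀ i, (c'.1 i : ℕ) = c.1 i + k
  have hP0 : P 0 := ⟨c, hc, rfl, fun i => rfl⟩
  have hPm : ∀ k, P k → k ≤ m := by
    rintro k ⟨c', -, -, h⟩
    have := h ⟨0, hd⟩
    have := (c'.1 ⟨0, hd⟩).2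
    omega
  obtain ⟨c', h1, h2, h3⟩ : P (Nat.findGreatest P m) := Nat.findGreatest_spec (Nat.zero_le m) hP0
  refine ⟨c', ?_, h1, h2, _, h3⟩
  have hnot : ¬ P (Nat.findGreatest P m + 1) := by
    intro h
    have := Nat.le_findGreatest (hPm _ h) h
    omega
  have e2 : ∀ a : ℝ, (a + 1) / m = a / m + 1 / m := fun a => by ring
  by_cases hin : ∀ i, (c'.1 i : ℕ) + 1 < m
  · let c'' : (Fin d → Fin m) × Fin m := (fun i => ⟨(c'.1 i : ℕ) + 1, hin i⟩, c'.2)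
    have hnn : ¬ gridCubeP c'' ⊆ A := by
      intro h
      exact hnot ⟨c'', h, h2, fun i => by simp only [c'']; rw [h3 i]; ring⟩
    obtain ⟨y, hy, hyA⟩ := Set.not_subset.1 hnn
    have hxm : ((fun i => y.1 i - 1 / m, y.2) : (Fin d → ℝ) × ℝ) ∈ gridCubeP c' := by
      refine ⟨fun i => ?_, hy.2⟩
      have := hy.1 i
      simp only [c''] at this
      push_cast at this
      rw [e2, e2, ← e2] at this
      have q := e2 (c'.1 i)
      constructor
      · simp only; linarith [this.1]
      · simp only; linarith [this.2]
    exact nearc_of_shift A c' _ y hxm (h1 hxm) (fun i => by simp) rfl hyA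
  · push Not at hin
    obtain ⟨i, hi⟩ := hin
    have e3 : ∀ a : ℝ, (a + 1 / 2) / m = a / m + (1 / m) / 2 := fun a => by ring
    have e4 : 0 < 1 / (m : ℝ) := by positivity
    have hxm : ((fun i => ((c'.1 i : ℝ) + 1 / 2) / m, ((c'.2 : ℝ) + 1 / 2) / m) :
        (Fin d → ℝ) × ℝ) ∈ gridCubeP c' := by
      refine ⟨fun i => ?_, ?_⟩ <;> simp only [e3, e2] <;> constructor <;> linarith
    refine nearc_of_shift A c' _
      (fun i => ((c'.1 i : ℝ) + 1 / 2) / m + 1 / m, ((c'.2 : ℝ) + 1 / 2) / m) hxm (h1 hxm)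
      (fun i => rfl) rfl ?_
    intro hmem
    have h5 := (hA _ hmem).2 i
    simp only [Pi.one_apply, e3] at h5
    have h6 : (m : ℝ) ≤ (c'.1 i : ℝ) + 1 := by exact_mod_cast hi
    have h7 : 1 ≤ ((c'.1 i : ℝ) + 1) / m := by rwa [le_div_iff₀ hm, one_mul]
    rw [e2] at h7
    linarith

lemma card_bad_le {d m : ℕ} (hd : 1 ≤ d) (A : Set ((Fin d → ℝ) × ℝ))
    (hA : ∀ z ∈ A, z.1 ∈ Icc (0 : Fin d → ℝ) 1) (t : Fin d → ℝ) :
    (bdry m A ∪ cutc m A t).ncard ≤ (nearc m A).ncard := by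
  classical
  have h : ∀ c : (Fin d → Fin m) × Fin m, ∃ c' : (Fin d → Fin m) × Fin m, gridCubeP c ⊆ A →
      (c' ∈ nearc m A ∧ gridCubeP c' ⊆ A ∧ c'.2 = c.2 ∧
      ∃ k : ℕ, ∀ i, (c'.1 i : ℕ) = c.1 i + k) := by
    intro c
    by_cases hc : gridCubeP c ⊆ A
    · obtain ⟨c', h⟩ := cut_shift hd A hA c hc
      exact ⟨c', fun _ => h⟩
    · exact ⟨c, fun h => absurd h hc⟩
  choose g hg using h
  have hbd : ∀ c ∈ bdry m A, ¬ gridCubeP c ⊆ A := fun c hc h => by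
    obtain ⟨z, hz, hzA⟩ := hc.2
    exact hzA (h hz)
  have hm : ∀ c : (Fin d → Fin m) × Fin m, (0 : ℝ) < m := fun c => by exact_mod_cast c.2.pos
  refine Set.ncard_le_ncard_of_injOn (fun c => if gridCubeP c ⊆ A then g c else c) ?_ ?_
    (Set.toFinite _)
  · intro c hc
    by_cases h : gridCubeP c ⊆ A
    · simp only [h, if_true]; exact (hg c h).1
    · simp only [h, if_false]
      rcases hc with hc | hc
      · exact bdry_subset_nearc A hc
      · exact absurd hc.1 h
  · have key : ∀ c c' : (Fin d → Fin m) × Fin m, c ∈ cutc m A t → c' ∈ cutc m A t → c.2 = c'.2 →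
        ∀ k k' : ℕ, (∀ i, (c.1 i : ℕ) + k = c'.1 i + k') → k' ≤ k := by
      intro c c' hc hc' _ k k' hk
      by_contra! hlt
      obtain ⟨i, hi⟩ := hc'.2.2
      have h1 := hc.2.1 i
      have h2 := hk i
      have h3 : ((c'.1 i : ℕ) : ℝ) + 1 ≤ (c.1 i : ℕ) := by exact_mod_cast (by omega)
      have h4 : (((c'.1 i : ℕ) : ℝ) + 1) / m ≤ ((c.1 i : ℕ) : ℝ) / m := by gcongr
      linarith
    intro c hc c' hc' he
    simp only at he
    by_cases h : gridCubeP c ⊆ A <;> by_cases h' : gridCubeP c' ⊆ A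
    · simp only [h, h', if_true] at he
      have hc1 : c ∈ cutc m A t := hc.resolve_left fun q => hbd _ q h
      have hc1' : c' ∈ cutc m A t := hc'.resolve_left fun q => hbd _ q h'
      obtain ⟨-, -, e1, k, hk⟩ := hg c h
      obtain ⟨-, -, e1', k', hk'⟩ := hg c' h'
      have e2 : c.2 = c'.2 := by rw [← e1, ← e1', he]
      have hkk : ∀ i, (c.1 i : ℕ) + k = c'.1 i + k' := fun i => by rw [← hk, ← hk', he]
      have l1 := key c c' hc1 hc1' e2 k k' hkk
      have l2 := key c' c hc1' hc1 e2.symm k' k (fun i => (hkk i).symm)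
      refine Prod.ext (funext fun i => Fin.ext ?_) e2
      have := hkk i
      omega
    · simp only [h, h', if_true, if_false] at he
      exact absurd (he ▸ (hg c h).2.1) h'
    · simp only [h, h', if_true, if_false] at he
      exact absurd (he ▸ (hg c' h').2.1) h
    · simpa only [h, h', if_false] using he

lemma nearc_card_bound {d : ℕ} (A : Set ((Fin d → ℝ) × ℝ)) (MA : ℝ) (hMA : 0 < MA)
    (h : HasMinkowskiContentP A MA) :
    ∀ᶠ m : ℕ in atTop, ((nearc m A).ncard : ℝ) ≤ 6 * Real.sqrt (d + 1) * MA * (m : ℝ) ^ d := by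
  have hs : 0 < Real.sqrt ((d : ℝ) + 1) := Real.sqrt_pos.2 (by positivity)
  have ht : Tendsto (fun m : ℕ => 2 * Real.sqrt ((d : ℝ) + 1) / m) atTop (nhdsWithin 0 (Ioi 0)) := by
    refine tendsto_nhdsWithin_iff.2 ⟨tendsto_const_div_atTop_nhds_zero_nat _, ?_⟩
    filter_upwards [eventually_gt_atTop 0] with m hm
    have : (0 : ℝ) < m := by exact_mod_cast hm
    exact mem_Ioi.2 (by positivity)
  have h2 := h.comp ht
  have h3 := h2.eventually (lt_mem_nhds hMA)
  have h4 := h2.eventually (gt_mem_nhds (by linarith : MA < 3 / 2 * MA))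
  filter_upwards [h3, h4, eventually_gt_atTop 0] with m h3 h4 hm
  simp only [Function.comp] at h3 h4
  have hm' : (0 : ℝ) < m := by exact_mod_cast hm
  set V := volume (euclNbhdP (frontier A) (2 * Real.sqrt ((d : ℝ) + 1) / m)) with hV
  have hfin : V ≠ ⊤ := by
    intro h; rw [h] at h3; simp at h3
  rw [div_lt_iff₀ (by positivity)] at h4
  have h5 := card_mul_le_volume (nearc m A).toFinite.toFinset _ hfin (fun c hc => by
    simpa [nearc] using hc)
  rw [← Set.ncard_eq_toFinset_card] at h5
  have h6 := h5.trans h4.le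
  rw [one_div, inv_pow, ← div_eq_mul_inv, div_le_iff₀ (by positivity)] at h6
  refine h6.trans (le_of_eq ?_)
  rw [pow_succ]
  field_simp
  ring

open ProbabilityTheory in
lemma hoeff_one {ι Ω : Type*} [Fintype ι] [MeasurableSpace Ω] (μ : ι → Measure Ω)
    [∀ i, IsProbabilityMeasure (μ i)] (f : Ω → ℝ) (hf : Measurable f) (a : ℝ)
    (hb : ∀ z, f z ∈ Icc a (a + 1)) (S : Finset ι) (n : ℝ) (hn : (S.card : ℝ) ≤ n)
    (r : ℝ) (hr : 0 < r) :
    (Measure.pi μ).real {x | r ≤ ∑ i ∈ S, (f (x i) - ∫ z, f z ∂(μ i))}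
      ≤ Real.exp (-(2 * r ^ 2 / n)) := by
  rcases S.eq_empty_or_nonempty with rfl | hS
  · have : {x : ι → Ω | r ≤ ∑ i ∈ (∅ : Finset ι), (f (x i) - ∫ z, f z ∂(μ i))} = ∅ := by
      ext x; simp [hr]
    rw [this]; simp [Real.exp_nonneg]
  have hcard : (0 : ℝ) < S.card := by exact_mod_cast hS.card_pos
  have hind : iIndepFun (fun i (x : ι → Ω) => f (x i) - ∫ z, f z ∂(μ i)) (Measure.pi μ) :=
    iIndepFun_pi (X := fun i z => f z - ∫ z, f z ∂(μ i)) (fun i => (hf.sub_const _).aemeasurable)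
  have hsub : ∀ i ∈ S, HasSubgaussianMGF (fun (x : ι → Ω) => f (x i) - ∫ z, f z ∂(μ i))
      ((‖(a + 1) - a‖₊ / 2) ^ 2) (Measure.pi μ) := by
    intro i _
    have h := hasSubgaussianMGF_of_mem_Icc (μ := Measure.pi μ) (X := fun x : ι → Ω => f (x i))
      (a := a) (b := a + 1) (hf.comp (measurable_pi_apply i)).aemeasurable
      (ae_of_all _ fun x => hb _)
    have he : ∫ x : ι → Ω, f (x i) ∂(Measure.pi μ) = ∫ z, f z ∂(μ i) := by
      have hmp := measurePreserving_eval μ i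
      rw [← hmp.map_eq, integral_map hmp.measurable.aemeasurable hf.aestronglyMeasurable]
    simpa only [he] using h
  have h := HasSubgaussianMGF.measure_sum_ge_le_of_iIndepFun hind hsub hr.le
  refine h.trans (Real.exp_le_exp.2 ?_)
  have e : (((∑ i ∈ S, ((‖(a + 1) - a‖₊ / 2) ^ 2) : NNReal)) : ℝ) = S.card / 4 := by
    simp
    try ring
  push_cast at e ⊢
  rw [e, neg_div, neg_le_neg_iff]
  have : r ^ 2 / (2 * ((S.card : ℝ) / 4)) = 2 * r ^ 2 / S.card := by
    field_simp; try ring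
  rw [this]
  gcongr

lemma hoeff_two {ι Ω : Type*} [Fintype ι] [MeasurableSpace Ω] (μ : ι → Measure Ω)
    [∀ i, IsProbabilityMeasure (μ i)] (f : Ω → ℝ) (hf : Measurable f) (a : ℝ)
    (hb : ∀ z, f z ∈ Icc a (a + 1)) (S : Finset ι) (n : ℝ) (hn : (S.card : ℝ) ≤ n)
    (r : ℝ) (hr : 0 < r) :
    (Measure.pi μ).real {x | r ≤ |∑ i ∈ S, (f (x i) - ∫ z, f z ∂(μ i))|}
      ≤ 2 * Real.exp (-(2 * r ^ 2 / n)) := by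
  have h1 := hoeff_one μ f hf a hb S n hn r hr
  have h2 := hoeff_one μ (fun z => - f z) hf.neg (-a - 1)
    (fun z => by have := hb z; constructor <;> linarith [this.1, this.2]) S n hn r hr
  have hsub : {x : ι → Ω | r ≤ |∑ i ∈ S, (f (x i) - ∫ z, f z ∂(μ i))|} ⊆
      {x | r ≤ ∑ i ∈ S, (f (x i) - ∫ z, f z ∂(μ i))} ∪
      {x | r ≤ ∑ i ∈ S, (- f (x i) - ∫ z, - f z ∂(μ i))} := by
    intro x hx
    simp only [mem_ofPred_eq] at hx
    rcases le_abs.1 hx with h | h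
    · left; exact h
    · right
      simp only [mem_ofPred_eq]
      refine h.trans (le_of_eq ?_)
      rw [← Finset.sum_neg_distrib]
      refine Finset.sum_congr rfl fun i _ => ?_
      rw [integral_neg]; ring
  refine (measureReal_mono hsub).trans ((measureReal_union_le _ _).trans ?_)
  linarith

lemma hoeff_exists {ι Ω κ : Type*} [Fintype ι] [Fintype κ] [MeasurableSpace Ω] (μ : ι → Measure Ω)
    [∀ i, IsProbabilityMeasure (μ i)] (Q : ι → Set Ω) (hQ : ∀ i, ∀ᵐ z ∂(μ i), z ∈ Q i)
    (f : κ → Ω → ℝ) (hf : ∀ k, Measurable (f k)) (a : κ → ℝ)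
    (hb : ∀ k z, f k z ∈ Icc (a k) (a k + 1)) (S : κ → Finset ι) (n : ℝ)
    (hn : ∀ k, ((S k).card : ℝ) ≤ n) (r : ℝ) (hr : 0 < r)
    (hlt : (Fintype.card κ : ℝ) * (2 * Real.exp (-(2 * r ^ 2 / n))) < 1) :
    ∃ x : ι → Ω, (∀ i, x i ∈ Q i) ∧
      ∀ k, |∑ i ∈ S k, (f k (x i) - ∫ z, f k z ∂(μ i))| < r := by
  by_contra! hcon
  have hae : ∀ᵐ x ∂(Measure.pi μ), ∀ i, x i ∈ Q i :=
    eventually_all.2 fun i => (Measure.tendsto_eval_ae_ae (μ := μ) (i := i)).eventually (hQ i)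
  have hae2 : ∀ᵐ x ∂(Measure.pi μ),
      x ∈ ⋃ k, {x | r ≤ |∑ i ∈ S k, (f k (x i) - ∫ z, f k z ∂(μ i))|} := by
    filter_upwards [hae] with x hx
    obtain ⟨k, hk⟩ := hcon x hx
    exact mem_iUnion.2 ⟨k, hk⟩
  have h1 : (Measure.pi μ).real (⋃ k, {x | r ≤ |∑ i ∈ S k, (f k (x i) - ∫ z, f k z ∂(μ i))|}) = 1 := by
    have hone : (Measure.pi μ)
        (⋃ k, {x | r ≤ |∑ i ∈ S k, (f k (x i) - ∫ z, f k z ∂(μ i))|}) = 1 := by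
      refine (mem_ae_iff_prob_eq_one₀ ?_).1 hae2
      refine (MeasurableSet.iUnion fun k => ?_).nullMeasurableSet
      refine measurableSet_le measurable_const ?_
      have : ∀ i, Measurable fun x : ι → Ω => f k (x i) := fun i =>
        (hf k).comp (measurable_pi_apply i)
      fun_prop
    rw [measureReal_def, hone]; simp
  have h2 := measureReal_iUnion_fintype_le (μ := Measure.pi μ)
    (fun k => {x | r ≤ |∑ i ∈ S k, (f k (x i) - ∫ z, f k z ∂(μ i))|})
  rw [h1] at h2
  have h3 := Finset.sum_le_sum fun k (_ : k ∈ Finset.univ) =>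
    hoeff_two μ (f k) (hf k) (a k) (hb k) (S k) n (hn k) r hr
  rw [Finset.sum_const, nsmul_eq_mul, Finset.card_univ] at h3
  linarith

lemma measurableSet_graphRegion {d : ℕ} (ψ : (Fin d → ℝ) → ℝ) (L : ℝ) (hmeas : Measurable ψ) :
    MeasurableSet (graphRegion ψ L) := by
  have h1 : MeasurableSet {z : (Fin d → ℝ) × ℝ | z.1 ∈ Icc (0 : Fin d → ℝ) 1} :=
    measurable_fst measurableSet_Icc
  have h2 : MeasurableSet {z : (Fin d → ℝ) × ℝ | z.2 ∈ Icc (0 : ℝ) 1} :=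
    measurable_snd measurableSet_Icc
  have h3 : MeasurableSet {z : (Fin d → ℝ) × ℝ | L * z.2 ≤ ψ z.1} :=
    measurableSet_le (by fun_prop) (by fun_prop)
  exact h1.inter (h2.inter h3)

lemma lowerBox_eq {d : ℕ} (t : Fin d → ℝ) :
    lowerBox t = Set.pi univ fun i => Ico 0 (t i) := by
  ext z; simp [lowerBox, Set.mem_pi]

lemma measurableSet_lowerBox {d : ℕ} (t : Fin d → ℝ) : MeasurableSet (lowerBox t) := by
  rw [lowerBox_eq]; exact MeasurableSet.univ_pi fun i => measurableSet_Ico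

lemma lowerBox_mono {d : ℕ} {t t' : Fin d → ℝ} (h : t ≤ t') : lowerBox t ⊆ lowerBox t' :=
  fun z hz i => ⟨(hz i).1, (hz i).2.trans_le (h i)⟩

lemma lowerBox_subset_Icc {d : ℕ} {t : Fin d → ℝ} (h : t ≤ 1) :
    lowerBox t ⊆ Icc (0 : Fin d → ℝ) 1 :=
  fun z hz => ⟨fun i => (hz i).1, fun i => (hz i).2.le.trans (h i)⟩

lemma integrableOn_psi {d : ℕ} (L : ℝ) (ψ : (Fin d → ℝ) → ℝ)
    (hmeas : Measurable ψ) (hψ0 : ∀ z ∈ Icc (0 : Fin d → ℝ) 1, 0 ≤ ψ z)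
    (hψL : ∀ z ∈ Icc (0 : Fin d → ℝ) 1, ψ z ≤ L) : IntegrableOn ψ (Icc (0 : Fin d → ℝ) 1) := by
  refine Measure.integrableOn_of_bounded (M := L) ?_ hmeas.aestronglyMeasurable ?_
  · exact (isCompact_Icc.measure_lt_top).ne
  · refine (ae_restrict_mem measurableSet_Icc).mono fun z hz => ?_
    rw [Real.norm_eq_abs, abs_of_nonneg (hψ0 z hz)]; exact hψL z hz

lemma integral_lowerBox_one {d : ℕ} (ψ : (Fin d → ℝ) → ℝ) :
    ∫ z in lowerBox (1 : Fin d → ℝ), ψ z = ∫ z in Icc (0 : Fin d → ℝ) 1, ψ z := by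
  rw [lowerBox_eq]
  exact setIntegral_congr_set (Measure.univ_pi_Ico_ae_eq_Icc (f := (0 : Fin d → ℝ)) (g := 1))

lemma volume_region {d : ℕ} (L : ℝ) (hL : 0 < L) (ψ : (Fin d → ℝ) → ℝ)
    (hmeas : Measurable ψ) (hψ0 : ∀ z ∈ Icc (0 : Fin d → ℝ) 1, 0 ≤ ψ z)
    (hψL : ∀ z ∈ Icc (0 : Fin d → ℝ) 1, ψ z ≤ L) (t : Fin d → ℝ) (ht : t ≤ 1) :
    volume.real (unitU d ∩ (graphRegion ψ L ∩ (lowerBox t ×ˢ univ))) =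
      (∫ z in lowerBox t, ψ z) / L := by
  have hB := lowerBox_subset_Icc ht
  have hmU : MeasurableSet (unitU d) :=
    (MeasurableSet.univ_pi fun i => measurableSet_Ico).prod measurableSet_Ico
  have hms := hmU.inter ((measurableSet_graphRegion ψ L hmeas).inter
    ((measurableSet_lowerBox t).prod MeasurableSet.univ))
  have hsec : ∀ z : Fin d → ℝ, volume (Prod.mk z ⁻¹'
      (unitU d ∩ (graphRegion ψ L ∩ (lowerBox t ×ˢ univ)))) =
      (lowerBox t).indicator (fun z => ENNReal.ofReal (ψ z / L)) z := by
    intro z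
    by_cases hz : z ∈ lowerBox t
    · rw [Set.indicator_of_mem hz]
      have h0 := hψ0 z (hB hz)
      have h1 := hψL z (hB hz)
      have h1' : ψ z / L ≤ 1 := by rwa [div_le_one hL]
      apply le_antisymm
      · calc _ ≤ volume (Icc 0 (ψ z / L)) := by
              apply measure_mono
              rintro y ⟨⟨-, hy⟩, ⟨-, -, hy2⟩, -⟩
              exact ⟨hy.1, by rw [le_div_iff₀ hL]; simpa [mul_comm] using hy2⟩
          _ = _ := by rw [Real.volume_Icc, sub_zero]
      · calc _ = volume (Ico 0 (ψ z / L)) := by rw [Real.volume_Ico, sub_zero]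
          _ ≤ _ := by
              apply measure_mono
              intro y hy
              refine ⟨⟨fun i _ => ⟨(hz i).1, (hz i).2.trans_le (ht i)⟩, hy.1, hy.2.trans_le h1'⟩,
                ⟨hB hz, ⟨hy.1, hy.2.le.trans h1'⟩, ?_⟩, hz, trivial⟩
              have := hy.2.le
              rw [le_div_iff₀ hL] at this
              simpa [mul_comm] using this
    · rw [Set.indicator_of_notMem hz]
      convert measure_empty (μ := volume)
      ext y
      simp [hz]
  have hint : IntegrableOn (fun z => ψ z / L) (lowerBox t) :=
    ((integrableOn_psi L ψ hmeas hψ0 hψL).mono_set hB).div_const L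
  rw [measureReal_def, Measure.volume_eq_prod, Measure.prod_apply hms]
  rw [lintegral_congr hsec, lintegral_indicator (measurableSet_lowerBox t),
    ← ofReal_integral_eq_lintegral_ofReal hint, ENNReal.toReal_ofReal, integral_div]
  · refine setIntegral_nonneg (measurableSet_lowerBox t) fun z hz => ?_
    have := hψ0 z (hB hz); positivity
  · refine (ae_restrict_mem (measurableSet_lowerBox t)).mono fun z hz => ?_
    have := hψ0 z (hB hz)
    simp only [Pi.zero_apply]; positivity

/-- test function -/
noncomputable def ftest {d : ℕ} (A : Set ((Fin d → ℝ) × ℝ)) (t : Fin d → ℝ) (a : ℝ)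
    (z : (Fin d → ℝ) × ℝ) : ℝ :=
  A.indicator (fun z => (lowerBox t).indicator (fun _ => (1 : ℝ)) z.1 - a) z

lemma ftest_eq {d : ℕ} (A : Set ((Fin d → ℝ) × ℝ)) (t : Fin d → ℝ) (a : ℝ) :
    ftest A t a = fun z => (A ∩ (lowerBox t ×ˢ univ)).indicator (fun _ => (1 : ℝ)) z
      - a * A.indicator (fun _ => (1 : ℝ)) z := by
  funext z
  classical
  by_cases h1 : z ∈ A <;> by_cases h2 : z.1 ∈ lowerBox t <;> simp [ftest, Set.indicator, h1, h2]

lemma measurable_ftest {d : ℕ} {A : Set ((Fin d → ℝ) × ℝ)} (hA : MeasurableSet A)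
    (t : Fin d → ℝ) (a : ℝ) : Measurable (ftest A t a) := by
  rw [ftest_eq]
  exact (measurable_const.indicator (hA.inter ((measurableSet_lowerBox t).prod .univ))).sub
    ((measurable_const.indicator hA).const_mul a)

lemma ftest_mem {d : ℕ} (A : Set ((Fin d → ℝ) × ℝ)) (t : Fin d → ℝ) (a : ℝ)
    (h0 : 0 ≤ a) (h1 : a ≤ 1) (z) : ftest A t a z ∈ Icc (-a) (-a + 1) := by
  classical
  by_cases h2 : z ∈ A <;> by_cases h3 : z.1 ∈ lowerBox t <;>
    simp [ftest, Set.indicator, h2, h3] <;> (try constructor) <;> linarith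

lemma volume_unitU {d : ℕ} : volume (unitU d) = 1 := by
  rw [unitU, Measure.volume_eq_prod, Measure.prod_prod, volume_pi_pi]
  simp

lemma measurableSet_unitU {d : ℕ} : MeasurableSet (unitU d) :=
    (MeasurableSet.univ_pi fun i => measurableSet_Ico).prod measurableSet_Ico

lemma integrableOn_ftest {d : ℕ} {A : Set ((Fin d → ℝ) × ℝ)} (hA : MeasurableSet A)
    (t : Fin d → ℝ) (a : ℝ) (h0 : 0 ≤ a) (h1 : a ≤ 1) : IntegrableOn (ftest A t a) (unitU d) := by
  refine Measure.integrableOn_of_bounded (M := 1) ?_ (measurable_ftest hA t a).aestronglyMeasurable ?_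
  · rw [volume_unitU]; simp
  · refine ae_of_all _ fun z => ?_
    have := ftest_mem A t a h0 h1 z
    rw [Real.norm_eq_abs, abs_le]
    constructor <;> linarith [this.1, this.2]

lemma integral_ftest {d : ℕ} (L : ℝ) (hL : 0 < L) (ψ : (Fin d → ℝ) → ℝ)
    (hmeas : Measurable ψ) (hψ0 : ∀ z ∈ Icc (0 : Fin d → ℝ) 1, 0 ≤ ψ z)
    (hψL : ∀ z ∈ Icc (0 : Fin d → ℝ) 1, ψ z ≤ L) (t : Fin d → ℝ) (ht : t ≤ 1)
    (C : ℝ) (hC : C = ∫ z in Icc (0 : Fin d → ℝ) 1, ψ z) (hCpos : 0 < C) :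
    ∫ z in unitU d, ftest (graphRegion ψ L) t ((1 / C) * ∫ z in lowerBox t, ψ z) z = 0 := by
  have hA := measurableSet_graphRegion ψ L hmeas
  have hv1 := volume_region L hL ψ hmeas hψ0 hψL t ht
  have hv2 := volume_region L hL ψ hmeas hψ0 hψL 1 le_rfl
  rw [integral_lowerBox_one, ← hC] at hv2
  have hv3 : unitU d ∩ (graphRegion ψ L ∩ (lowerBox 1 ×ˢ univ)) = unitU d ∩ graphRegion ψ L := by
    ext z
    simp only [mem_inter_iff, mem_prod, mem_univ, and_true]
    refine ⟨fun h => ⟨h.1, h.2.1⟩, fun h => ⟨h.1, h.2, ?_⟩⟩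
    exact fun i => h.1.1 i trivial
  rw [hv3] at hv2
  have hfin : volume (unitU d) ≠ ⊤ := by rw [volume_unitU]; simp
  have hAt := hA.inter ((measurableSet_lowerBox t).prod (MeasurableSet.univ (α := ℝ)))
  rw [ftest_eq, integral_sub, integral_const_mul, integral_indicator_const _ hAt,
    integral_indicator_const _ hA]
  · simp only [measureReal_restrict_apply hAt, measureReal_restrict_apply hA]
    rw [inter_comm _ (unitU d), inter_comm _ (unitU d), hv1, hv2]
    simp only [smul_eq_mul]
    field_simp
    ring
  · exact (integrableOn_const hfin).indicator hAt
  · have hi : IntegrableOn ((graphRegion ψ L).indicator fun _ => (1 : ℝ)) (unitU d) :=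
      (integrableOn_const hfin).indicator hA
    exact Integrable.const_mul hi _

open ProbabilityTheory in
lemma sum_mean {d m : ℕ} (hm : 0 < m) (f : (Fin d → ℝ) × ℝ → ℝ) (hf : IntegrableOn f (unitU d))
    (h0 : ∫ z in unitU d, f z = 0) :
    ∑ c : (Fin d → Fin m) × Fin m, ∫ z, f z ∂(cond volume (gridCubeP c)) = 0 := by
  have h1 : ∀ c : (Fin d → Fin m) × Fin m, ∫ z, f z ∂(cond volume (gridCubeP c)) =
      ((ENNReal.ofReal ((1 / (m : ℝ)) ^ (d + 1)))⁻¹).toReal * ∫ z in gridCubeP c, f z := by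
    intro c
    rw [ProbabilityTheory.cond, integral_smul_measure, volume_gridCubeP, smul_eq_mul]
  simp_rw [h1]
  rw [← Finset.mul_sum]
  rw [← iUnion_gridCubeP hm] at h0 hf
  rw [integral_iUnion_fintype measurableSet_gridCubeP disjoint_gridCubeP
    (fun c => hf.mono_set (subset_iUnion _ c))] at h0
  rw [h0, mul_zero]

lemma isProb_cond {d m : ℕ} (c : (Fin d → Fin m) × Fin m) :
    IsProbabilityMeasure (ProbabilityTheory.cond volume (gridCubeP c)) := by
  have hm : (0 : ℝ) < m := by exact_mod_cast c.2.pos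
  apply ProbabilityTheory.cond_isProbabilityMeasure_of_finite
  · rw [volume_gridCubeP, Ne, ENNReal.ofReal_eq_zero, not_le]; positivity
  · rw [volume_gridCubeP]; simp

lemma ftest_const {d m : ℕ} (A : Set ((Fin d → ℝ) × ℝ)) (t : Fin d → ℝ) (a : ℝ)
    (c : (Fin d → Fin m) × Fin m) (hc : c ∉ bdry m A ∪ cutc m A t) (x z : (Fin d → ℝ) × ℝ)
    (hx : x ∈ gridCubeP c) (hz : z ∈ gridCubeP c) : ftest A t a x = ftest A t a z := by
  classical
  simp only [mem_union, not_or] at hc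
  obtain ⟨h1, h2⟩ := hc
  have hm : (0 : ℝ) < m := by exact_mod_cast c.2.pos
  by_cases hA : gridCubeP c ⊆ A
  · have key : ∀ x z, x ∈ gridCubeP c → z ∈ gridCubeP c → x.1 ∈ lowerBox t → z.1 ∈ lowerBox t := by
      intro x z hx hz h
      by_contra hcon
      apply h2
      refine ⟨hA, fun i => (hx.1 i).1.trans_lt (h i).2, ?_⟩
      simp only [lowerBox, Set.mem_ofPred_eq, not_forall, not_and, not_lt] at hcon
      obtain ⟨i, hi⟩ := hcon
      refine ⟨i, (hi (le_trans (by positivity) (hz.1 i).1)).trans_lt (hz.1 i).2⟩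
    have hiff : x.1 ∈ lowerBox t ↔ z.1 ∈ lowerBox t := ⟨key x z hx hz, key z x hz hx⟩
    simp only [ftest, Set.indicator, hA hx, hA hz, hiff]
  · have hno : ∀ y ∈ gridCubeP c, y ∉ A := by
      intro y hy hyA
      obtain ⟨w, hw, hwA⟩ := Set.not_subset.1 hA
      exact h1 ⟨⟨y, hy, hyA⟩, w, hw, hwA⟩
    simp [ftest, Set.indicator, hno x hx, hno z hz]

open ProbabilityTheory in
lemma mean_const {d m : ℕ} (f : (Fin d → ℝ) × ℝ → ℝ) (c : (Fin d → Fin m) × Fin m)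
    (x : (Fin d → ℝ) × ℝ) (h : ∀ z ∈ gridCubeP c, f z = f x) :
    ∫ z, f z ∂(cond volume (gridCubeP c)) = f x := by
  haveI := isProb_cond c
  have : f =ᵐ[cond volume (gridCubeP c)] fun _ => f x := by
    refine (ae_cond_mem (measurableSet_gridCubeP c)).mono fun z hz => h z hz
  rw [integral_congr_ae this]
  simp

lemma box_diff {d : ℕ} (L : ℝ) (hL : 0 < L) (ψ : (Fin d → ℝ) → ℝ)
    (hmeas : Measurable ψ) (hψ0 : ∀ z ∈ Icc (0 : Fin d → ℝ) 1, 0 ≤ ψ z)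
    (hψL : ∀ z ∈ Icc (0 : Fin d → ℝ) 1, ψ z ≤ L) (t t' : Fin d → ℝ) (htt : t ≤ t')
    (ht : t' ≤ 1) (δ : ℝ) (hδ : 0 ≤ δ) (h : ∀ i, t' i - t i ≤ δ) :
    (∫ z in lowerBox t', ψ z) - (∫ z in lowerBox t, ψ z) ≤ L * (d * δ) := by
  have hint := (integrableOn_psi L ψ hmeas hψ0 hψL).mono_set (lowerBox_subset_Icc ht)
  have hint2 := hint.mono_set (diff_subset (s := lowerBox t') (t := lowerBox t))
  have hm := (measurableSet_lowerBox t').diff (measurableSet_lowerBox t)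
  have e := integral_diff (measurableSet_lowerBox t) hint (lowerBox_mono htt)
  have hsub : lowerBox t' \ lowerBox t ⊆ ⋃ i, Set.pi univ
      (Function.update (fun _ : Fin d => Ico (0 : ℝ) 1) i (Ico (t i) (t' i))) := by
    rintro z ⟨hz, hz2⟩
    simp only [lowerBox, Set.mem_ofPred_eq, not_forall, not_and, not_lt] at hz2
    obtain ⟨i, hi⟩ := hz2
    have hi2 := hi (hz i).1
    refine mem_iUnion.2 ⟨i, fun j _ => ?_⟩
    by_cases hj : j = i
    · subst hj
      rw [Function.update_self]
      exact ⟨hi2, (hz _).2⟩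
    · rw [Function.update_of_ne hj]
      exact ⟨(hz j).1, (hz j).2.trans_le (ht j)⟩
  have hv : volume (lowerBox t' \ lowerBox t) ≤ ENNReal.ofReal (d * δ) := by
    refine (measure_mono hsub).trans ((measure_iUnion_fintype_le _ _).trans ?_)
    calc _ ≤ ∑ i : Fin d, ENNReal.ofReal δ := by
            refine Finset.sum_le_sum fun i _ => ?_
            rw [volume_pi_pi, Finset.prod_eq_single i]
            · rw [Function.update_self, Real.volume_Ico]
              exact ENNReal.ofReal_le_ofReal (h i)
            · intro j _ hj
              rw [Function.update_of_ne hj]; simp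
            · simp
      _ = _ := by
            rw [Finset.sum_const, nsmul_eq_mul, ENNReal.ofReal_mul (by positivity)]
            simp
  have hvtop : volume (lowerBox t' \ lowerBox t) ≠ ⊤ := (hv.trans_lt ENNReal.ofReal_lt_top).ne
  have hvr : volume.real (lowerBox t' \ lowerBox t) ≤ d * δ :=
    ENNReal.toReal_le_of_le_ofReal (by positivity) hv
  rw [← e]
  calc _ ≤ ∫ z in lowerBox t' \ lowerBox t, L := by
          refine setIntegral_mono_on hint2 (integrableOn_const hvtop) hm fun z hz => ?_
          exact hψL z (lowerBox_subset_Icc ht hz.1)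
    _ = volume.real (lowerBox t' \ lowerBox t) * L := by
          rw [setIntegral_const, smul_eq_mul]
    _ ≤ L * (d * δ) := by rw [mul_comm]; gcongr

lemma N_lower {d m : ℕ} (hm : 0 < m) (L : ℝ) (hL : 0 < L) (ψ : (Fin d → ℝ) → ℝ)
    (hmeas : Measurable ψ) (hψ0 : ∀ z ∈ Icc (0 : Fin d → ℝ) 1, 0 ≤ ψ z)
    (hψL : ∀ z ∈ Icc (0 : Fin d → ℝ) 1, ψ z ≤ L)
    (C : ℝ) (hC : C = ∫ z in Icc (0 : Fin d → ℝ) 1, ψ z)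
    (x : ((Fin d → Fin m) × Fin m) → (Fin d → ℝ) × ℝ) (hx : ∀ c, x c ∈ gridCubeP c) :
    (m : ℝ) ^ (d + 1) * (C / L) ≤ (Nat.card {c // x c ∈ graphRegion ψ L} : ℝ) +
      ((nearc m (graphRegion ψ L)).ncard : ℝ) := by
  classical
  set A := graphRegion ψ L with hA
  have hv2 := volume_region L hL ψ hmeas hψ0 hψL 1 le_rfl
  rw [integral_lowerBox_one, ← hC] at hv2
  set T : Finset ((Fin d → Fin m) × Fin m) := ({c | x c ∈ A} ∪ nearc m A).toFinite.toFinset with hT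
  have hsub : unitU d ∩ (A ∩ (lowerBox 1 ×ˢ univ)) ⊆ ⋃ c ∈ T, gridCubeP c := by
    rintro z ⟨hz, hzA, -⟩
    rw [← iUnion_gridCubeP hm] at hz
    obtain ⟨c, hc⟩ := mem_iUnion.1 hz
    refine mem_iUnion₂.2 ⟨c, ?_, hc⟩
    rw [hT, Set.Finite.mem_toFinset]
    by_cases h : x c ∈ A
    · exact Or.inl h
    · exact Or.inr (bdry_subset_nearc A ⟨⟨z, hc, hzA⟩, x c, hx c, h⟩)
  have h1 : volume.real (unitU d ∩ (A ∩ (lowerBox 1 ×ˢ univ))) ≤ ∑ c ∈ T, volume.real (gridCubeP c) := by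
    refine (measureReal_mono hsub ?_).trans (measureReal_biUnion_finset_le _ _)
    refine ((measure_biUnion_finset_le _ _).trans_lt ?_).ne
    refine ENNReal.sum_lt_top.2 fun c _ => ?_
    rw [volume_gridCubeP]; exact ENNReal.ofReal_lt_top
  rw [hv2] at h1
  have hq : ∀ c : (Fin d → Fin m) × Fin m, volume.real (gridCubeP c) = (1 / (m : ℝ)) ^ (d + 1) := by
    intro c; rw [measureReal_def, volume_gridCubeP, ENNReal.toReal_ofReal (by positivity)]
  simp only [hq, Finset.sum_const, nsmul_eq_mul] at h1
  have h2 : T.card ≤ Nat.card {c // x c ∈ A} + (nearc m A).ncard := by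
    rw [hT, ← Set.ncard_eq_toFinset_card]
    exact Set.ncard_union_le _ _
  have hm' : (0 : ℝ) < m := by exact_mod_cast hm
  rw [one_div, inv_pow, ← div_eq_mul_inv, le_div_iff₀ (by positivity)] at h1
  calc _ = C / L * (m : ℝ) ^ (d + 1) := by ring
    _ ≤ _ := h1
    _ ≤ _ := by exact_mod_cast h2

/-- constants in the final estimate -/
lemma final_const {d m N : ℕ} (hm : 2 ≤ m) (L C MA : ℝ) (hL : 0 < L) (hC : 0 < C)
    (hMA : 0 < MA) (hN1 : (m : ℝ) ^ (d + 1) ≤ 2 * L / C * N) (hN2 : (m : ℝ) ^ d ≤ N) :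
    ((d + 1 : ℝ) ^ ((3 : ℝ) / 4) * Real.sqrt (6 * MA) *
      (Real.sqrt ((m : ℝ) ^ d) * Real.sqrt (d * Real.log m))) / N ≤
    ((d + 1 : ℝ) ^ ((3 : ℝ) / 4) * Real.sqrt (6 * MA)
                    / ((2 * L) ^ ((1 : ℝ) / (2 * (d + 1)) - 1 / 2)
                        * C ^ ((1 : ℝ) / 2 - 1 / (2 * (d + 1)))))
                  * (Real.sqrt (Real.log N) / (N : ℝ) ^ ((1 : ℝ) / 2 + 1 / (2 * (d + 1)))) := by
  have hm' : (0 : ℝ) < m := by exact_mod_cast (by omega : 0 < m)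
  have hNpos : (0 : ℝ) < N := lt_of_lt_of_le (by positivity) hN2
  set p : ℝ := 1 / 2 - 1 / (2 * (d + 1)) with hp
  have hp0 : 0 ≤ p := by
    have : (1 : ℝ) / (2 * (d + 1)) ≤ 1 / 2 := by
      apply one_div_le_one_div_of_le (by norm_num)
      have : (0 : ℝ) ≤ d := by positivity
      linarith
    linarith
  have e1 : (1 : ℝ) / (2 * (d + 1)) - 1 / 2 = -p := by rw [hp]; ring
  have e2 : (1 : ℝ) / 2 + 1 / (2 * (d + 1)) = 1 - p := by rw [hp]; ring
  rw [e1, e2, Real.rpow_neg (by positivity), Real.rpow_sub hNpos, Real.rpow_one]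
  have hlog : Real.sqrt (d * Real.log m) ≤ Real.sqrt (Real.log N) := by
    apply Real.sqrt_le_sqrt
    rw [← Real.log_pow]
    exact Real.log_le_log (by positivity) hN2
  have hpow : Real.sqrt ((m : ℝ) ^ d) ≤ (2 * L) ^ p / C ^ p * (N : ℝ) ^ p := by
    rw [← Real.div_rpow (by positivity) (by positivity), ← Real.mul_rpow (by positivity) (by positivity)]
    refine le_trans (le_of_eq ?_) (Real.rpow_le_rpow (by positivity) hN1 hp0)
    rw [Real.sqrt_eq_rpow, ← Real.rpow_natCast, ← Real.rpow_natCast, ← Real.rpow_mul hm'.le,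
      ← Real.rpow_mul hm'.le]
    congr 1
    rw [hp]; push_cast
    have : (d : ℝ) + 1 ≠ 0 := by positivity
    field_simp
    ring
  have hmul := mul_le_mul hpow hlog (Real.sqrt_nonneg _) (by positivity)
  set K := (d + 1 : ℝ) ^ ((3 : ℝ) / 4) * Real.sqrt (6 * MA) with hK
  have hK0 : 0 ≤ K := by positivity
  calc _ ≤ K * ((2 * L) ^ p / C ^ p * (N : ℝ) ^ p * Real.sqrt (Real.log N)) / N := by gcongr
    _ = _ := by
      have : (2 * L) ^ p ≠ 0 := (Real.rpow_pos_of_pos (by positivity) _).ne'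
      have : C ^ p ≠ 0 := (Real.rpow_pos_of_pos (by positivity) _).ne'
      have : (N : ℝ) ^ p ≠ 0 := (Real.rpow_pos_of_pos (by positivity) _).ne'
      field_simp

/-- union bound estimate -/
lemma union_bound {d m : ℕ} (hd : 1 ≤ d) (hm : 2 ≤ m) (hm2 : 2 ^ (d + 1) < m) (MA : ℝ)
    (hMA : 0 < MA) (r : ℝ)
    (hr : r = (d + 1 : ℝ) ^ ((3 : ℝ) / 4) * Real.sqrt (6 * MA) *
      (Real.sqrt ((m : ℝ) ^ d) * Real.sqrt (d * Real.log m))) :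
    (((m ^ (d + 2) + 1) ^ d : ℕ) : ℝ) *
      (2 * Real.exp (-(2 * r ^ 2 / (6 * Real.sqrt (d + 1) * MA * (m : ℝ) ^ d)))) < 1 := by
  have hm' : (0 : ℝ) < m := by exact_mod_cast (by omega : 0 < m)
  have hm1 : (1 : ℝ) ≤ m := by exact_mod_cast (by omega : 1 ≤ m)
  have hlog : 0 ≤ Real.log m := Real.log_nonneg hm1
  have hs : (0 : ℝ) < (d : ℝ) + 1 := by positivity
  have hr2 : r ^ 2 = (d + 1 : ℝ) * Real.sqrt (d + 1) * (6 * MA) * ((m : ℝ) ^ d * (d * Real.log m)) := by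
    rw [hr, mul_pow, mul_pow, mul_pow, Real.sq_sqrt (by positivity), Real.sq_sqrt (by positivity),
      Real.sq_sqrt (by positivity)]
    congr 2
    rw [← Real.rpow_natCast, ← Real.rpow_mul hs.le, Real.sqrt_eq_rpow]
    nth_rewrite 2 [← Real.rpow_one ((d : ℝ) + 1)]
    rw [← Real.rpow_add hs]
    norm_num
  have hsq : 0 < Real.sqrt ((d : ℝ) + 1) := Real.sqrt_pos.2 hs
  have he : 2 * r ^ 2 / (6 * Real.sqrt (d + 1) * MA * (m : ℝ) ^ d) =
      ((2 * (d + 1) * d : ℕ) : ℝ) * Real.log m := by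
    rw [hr2]; push_cast; field_simp
  rw [he, ← Real.log_pow, Real.exp_neg, Real.exp_log (by positivity)]
  have hcard : (((m ^ (d + 2) + 1) ^ d : ℕ) : ℝ) ≤ (2 * (m : ℝ) ^ (d + 2)) ^ d := by
    push_cast
    gcongr
    have : (1 : ℝ) ≤ (m : ℝ) ^ (d + 2) := one_le_pow₀ hm1
    linarith
  have hm3 : (2 : ℝ) ^ (d + 1) < m := by exact_mod_cast hm2
  have hpp : (0 : ℝ) < (m : ℝ) ^ (2 * (d + 1) * d) := by positivity
  rw [← mul_assoc, ← div_eq_mul_inv, div_lt_one hpp]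
  calc _ ≤ (2 * (m : ℝ) ^ (d + 2)) ^ d * 2 := by gcongr
    _ = 2 ^ (d + 1) * (m : ℝ) ^ ((d + 2) * d) := by rw [mul_pow, ← pow_mul]; ring
    _ < m * (m : ℝ) ^ ((d + 2) * d) := by gcongr
    _ = (m : ℝ) ^ ((d + 2) * d + 1) := by ring
    _ ≤ _ := by
      apply pow_le_pow_right₀ hm1
      nlinarith

lemma sum_subtype_conv {ι Ω : Type*} [Fintype ι] (A : Set Ω) (x : ι → Ω) (g : Ω → ℝ) (N : ℕ)
    (e : Fin N ≃ {c // x c ∈ A}) : ∑ k, g (x (e k)) = ∑ c, A.indicator g (x c) := by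
  classical
  rw [Equiv.sum_comp e (fun c => g (x c.1))]
  simp only [Set.indicator]
  rw [← Finset.sum_filter]
  exact (Finset.sum_subtype _ (by simp) (fun c => g (x c))).symm

/-- passing from the net to all `t` -/
lemma net_pass {d m : ℕ} (hm : 0 < m) (L : ℝ) (hL : 0 < L) (ψ : (Fin d → ℝ) → ℝ)
    (hmeas : Measurable ψ) (hψ0 : ∀ z ∈ Icc (0 : Fin d → ℝ) 1, 0 ≤ ψ z)
    (hψL : ∀ z ∈ Icc (0 : Fin d → ℝ) 1, ψ z ≤ L) (C : ℝ) (hCpos : 0 < C)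
    {N : ℕ} (hN : (N : ℝ) ≤ (m : ℝ) ^ (d + 1)) (y : Fin N → (Fin d → ℝ)) (r : ℝ)
    (hr : ∀ k : Fin d → Fin (m ^ (d + 2) + 1),
      |∑ j, (lowerBox fun i => ((k i : ℕ) : ℝ) / (m ^ (d + 2) : ℕ)).indicator (fun _ => (1 : ℝ)) (y j)
        - (1 / C * ∫ z in lowerBox (fun i => ((k i : ℕ) : ℝ) / (m ^ (d + 2) : ℕ)), ψ z) * N| < r)
    (t : Fin d → ℝ) (ht : t ∈ Icc (0 : Fin d → ℝ) 1) :
    |∑ j, (lowerBox t).indicator (fun _ => (1 : ℝ)) (y j)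
        - (1 / C * ∫ z in lowerBox t, ψ z) * N| ≤ r + L * d / (C * m) := by
  set K : ℕ := m ^ (d + 2) with hK
  have hm' : (0 : ℝ) < m := by exact_mod_cast hm
  have hK0 : (0 : ℝ) < (K : ℝ) := by rw [hK]; positivity
  have hb : ∀ i, t i * K ≤ K := fun i => by nlinarith [ht.2 i, show t i ≤ 1 from ht.2 i]
  have hnn : ∀ i, 0 ≤ t i * K := fun i => mul_nonneg (ht.1 i) hK0.le
  have hc : ∀ i, ⌈t i * K⌉₊ < K + 1 := fun i => Nat.lt_succ_of_le (Nat.ceil_le.2 (hb i))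
  have hf : ∀ i, ⌊t i * K⌋₊ < K + 1 := fun i =>
    lt_of_le_of_lt (Nat.floor_le_ceil _) (hc i)
  set k1 : Fin d → Fin (K + 1) := fun i => ⟨⌊t i * K⌋₊, hf i⟩ with hk1
  set k2 : Fin d → Fin (K + 1) := fun i => ⟨⌈t i * K⌉₊, hc i⟩ with hk2
  have r1 := hr k1
  have r2 := hr k2
  set t1 : Fin d → ℝ := fun i => ((k1 i : ℕ) : ℝ) / K with ht1
  set t2 : Fin d → ℝ := fun i => ((k2 i : ℕ) : ℝ) / K with ht2
  have l1 : t1 ≤ t := fun i => by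
    simp only [ht1, hk1]
    rw [div_le_iff₀ hK0]; exact Nat.floor_le (hnn i)
  have l2 : t ≤ t2 := fun i => by
    simp only [ht2, hk2]
    rw [le_div_iff₀ hK0]; exact Nat.le_ceil _
  have l3 : t2 ≤ 1 := fun i => by
    simp only [ht2, hk2, Pi.one_apply]
    rw [div_le_one hK0]; exact_mod_cast Nat.lt_succ_iff.1 (hc i)
  have l4 : ∀ i, t2 i - t1 i ≤ 1 / K := fun i => by
    simp only [ht2, ht1, hk1, hk2]
    rw [← sub_div]
    gcongr
    have : (⌈t i * K⌉₊ : ℝ) ≤ (⌊t i * K⌋₊ : ℝ) + 1 := by exact_mod_cast Nat.ceil_le_floor_add_one _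
    linarith
  have hd1 := box_diff L hL ψ hmeas hψ0 hψL t1 t2 (l1.trans l2) l3 (1 / K) (by positivity) l4
  have hint := (integrableOn_psi L ψ hmeas hψ0 hψL).mono_set (lowerBox_subset_Icc l3)
  have mono : ∀ u v : Fin d → ℝ, u ≤ v → v ≤ t2 →
      (∫ z in lowerBox u, ψ z) ≤ ∫ z in lowerBox v, ψ z := by
    intro u v huv hv
    refine setIntegral_mono_set (hint.mono_set (lowerBox_mono hv)) ?_ (lowerBox_mono huv).eventuallyLE
    refine (ae_restrict_mem (measurableSet_lowerBox v)).mono fun z hz => ?_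
    exact hψ0 z (lowerBox_subset_Icc (hv.trans l3) hz)
  have m1 := mono t1 t l1 l2
  have m2 := mono t t2 l2 le_rfl
  have smono : ∀ u v : Fin d → ℝ, u ≤ v → ∑ j, (lowerBox u).indicator (fun _ => (1 : ℝ)) (y j) ≤
      ∑ j, (lowerBox v).indicator (fun _ => (1 : ℝ)) (y j) := by
    intro u v huv
    refine Finset.sum_le_sum fun j _ => ?_
    exact Set.indicator_le_indicator_of_subset (lowerBox_mono huv) (fun _ => zero_le_one) _
  have s1 := smono t1 t l1
  have s2 := smono t t2 l2
  set I1 := ∫ z in lowerBox t1, ψ z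
  set I2 := ∫ z in lowerBox t2, ψ z
  set I := ∫ z in lowerBox t, ψ z
  have hN0 : (0 : ℝ) ≤ N := by positivity
  have key : ∀ J J' : ℝ, J' - J ≤ L * (d * (1 / K)) →
      (1 / C * J') * N - (1 / C * J) * N ≤ L * d / (C * m) := by
    intro J J' h
    have hq : (1 / C * J') * N - (1 / C * J) * N = (1 / C) * ((J' - J) * N) := by ring
    rw [hq]
    have : (J' - J) * N ≤ (L * (d * (1 / K))) * (m : ℝ) ^ (d + 1) := by
      refine (mul_le_mul_of_nonneg_right h hN0).trans ?_
      gcongr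
    calc _ ≤ (1 / C) * ((L * (d * (1 / K))) * (m : ℝ) ^ (d + 1)) := by gcongr
      _ = _ := by
        rw [hK]; push_cast
        rw [pow_succ (m : ℝ) (d + 1)]
        field_simp
  have k1' := key I I2 (by linarith)
  have k2' := key I1 I (by linarith)
  rw [abs_lt] at r1 r2
  rw [abs_le]
  constructor <;> linarith [r1.1, r1.2, r2.1, r2.2]

/-- **Existence of stratified inputs with small star discrepancy** (Theorem 1 of the
paper, with `s = d+1`): there is `m₀` such that for every `m ≥ m₀` there exists a
stratified point set (one point in each of the `m^s` grid cubes) whose accepted points,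
projected onto the first `s-1` coordinates, have weighted star discrepancy at most
`s^{3/4}√(6M_A) / ((2L)^{1/(2s)-1/2} C^{1/2-1/(2s)}) · √(log N)/N^{1/2+1/(2s)} + 2C/(LN)`. -/
theorem star_discrepancy_stratified (d : ℕ) (hd : 1 ≤ d)
    (L : ℝ) (hL : 0 < L) (ψ : (Fin d → ℝ) → ℝ) (hmeas : Measurable ψ)
    (hψ0 : ∀ z ∈ Icc (0 : Fin d → ℝ) 1, 0 ≤ ψ z)
    (hψL : ∀ z ∈ Icc (0 : Fin d → ℝ) 1, ψ z ≤ L)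
    (C : ℝ) (hC : C = ∫ z in Icc (0 : Fin d → ℝ) 1, ψ z) (hCpos : 0 < C)
    (MA : ℝ) (hMApos : 0 < MA) (hMink : HasMinkowskiContentP (graphRegion ψ L) MA) :
    ∃ m₀ : ℕ, ∀ m : ℕ, m₀ ≤ m →
      ∃ x : ((Fin d → Fin m) × Fin m) → (Fin d → ℝ) × ℝ,
        (∀ c, x c ∈ gridCubeP c) ∧
        ∀ N : ℕ, N = Nat.card {c : (Fin d → Fin m) × Fin m // x c ∈ graphRegion ψ L} →
        ∀ (y : Fin N → (Fin d → ℝ))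
          (e : Fin N ≃ {c : (Fin d → Fin m) × Fin m // x c ∈ graphRegion ψ L}),
          (∀ k, y k = (x (e k)).1) →
          ∀ t ∈ Icc (0 : Fin d → ℝ) 1,
            |(1 / (N : ℝ)) * ∑ k, (lowerBox t).indicator (fun _ => (1 : ℝ)) (y k)
                - (1 / C) * ∫ z in lowerBox t, ψ z|
              ≤ ((d + 1 : ℝ) ^ ((3 : ℝ) / 4) * Real.sqrt (6 * MA)
                    / ((2 * L) ^ ((1 : ℝ) / (2 * (d + 1)) - 1 / 2)
                        * C ^ ((1 : ℝ) / 2 - 1 / (2 * (d + 1)))))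
                  * (Real.sqrt (Real.log N) / (N : ℝ) ^ ((1 : ℝ) / 2 + 1 / (2 * (d + 1))))
                + 2 * C / (L * N) := by
  classical
  have hA := measurableSet_graphRegion ψ L hmeas
  set A := graphRegion ψ L with hAdef
  have hAI : ∀ z ∈ A, z.1 ∈ Icc (0 : Fin d → ℝ) 1 := fun z hz => hz.1
  have ev1 := nearc_card_bound A MA hMApos hMink
  have tn : Tendsto (fun m : ℕ => (m : ℝ)) atTop atTop := tendsto_natCast_atTop_atTop
  have ev2 := tn.eventually_ge_atTop (12 * Real.sqrt (d + 1) * MA * L / C)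
  have ev3 := tn.eventually_ge_atTop (2 * L / C)
  have ev4 := tn.eventually_ge_atTop (L ^ 2 * d / (2 * C ^ 2))
  obtain ⟨m₀, hm₀⟩ := eventually_atTop.1 (ev1.and (ev2.and (ev3.and (ev4.and
    (eventually_gt_atTop (2 ^ (d + 1)))))))
  refine ⟨m₀, fun m hmm => ?_⟩
  obtain ⟨b1, b2, b3, b4, b5⟩ := hm₀ m hmm
  have hm2 : 2 ≤ m := by
    have : 1 ≤ 2 ^ (d + 1) := Nat.one_le_two_pow
    omega
  have hm : 0 < m := by omega
  have hm' : (0 : ℝ) < m := by exact_mod_cast hm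
  set r : ℝ := (d + 1 : ℝ) ^ ((3 : ℝ) / 4) * Real.sqrt (6 * MA) *
      (Real.sqrt ((m : ℝ) ^ d) * Real.sqrt (d * Real.log m)) with hr
  have hr0 : 0 < r := by
    have h1 : 0 < Real.log m := Real.log_pos (by exact_mod_cast (by omega : 1 < m))
    have h2 : (0 : ℝ) < d := by exact_mod_cast hd
    have h3 : (0 : ℝ) < (d + 1 : ℝ) ^ ((3 : ℝ) / 4) := Real.rpow_pos_of_pos (by positivity) _
    have h4 : 0 < Real.sqrt (6 * MA) := Real.sqrt_pos.2 (by positivity)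
    have h5 : 0 < Real.sqrt ((m : ℝ) ^ d) := Real.sqrt_pos.2 (by positivity)
    have h6 : 0 < Real.sqrt (d * Real.log m) := Real.sqrt_pos.2 (by positivity)
    positivity
  set K : ℕ := m ^ (d + 2) with hK
  have hK0 : (0 : ℝ) < (K : ℝ) := by rw [hK]; positivity
  let τ : (Fin d → Fin (K + 1)) → (Fin d → ℝ) := fun k i => ((k i : ℕ) : ℝ) / K
  have hτ : ∀ k, τ k ≤ 1 := fun k i => by
    simp only [τ, Pi.one_apply]
    rw [div_le_one hK0]; exact_mod_cast Nat.lt_succ_iff.1 (k i).2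
  let a : (Fin d → ℝ) → ℝ := fun t => 1 / C * ∫ z in lowerBox t, ψ z
  have hint := integrableOn_psi L ψ hmeas hψ0 hψL
  have ha0 : ∀ t : Fin d → ℝ, t ≤ 1 → 0 ≤ a t := fun t ht => by
    have : 0 ≤ ∫ z in lowerBox t, ψ z := setIntegral_nonneg (measurableSet_lowerBox t)
      fun z hz => hψ0 z (lowerBox_subset_Icc ht hz)
    simp only [a]; positivity
  have ha1 : ∀ t : Fin d → ℝ, t ≤ 1 → a t ≤ 1 := fun t ht => by
    have : (∫ z in lowerBox t, ψ z) ≤ C := by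
      rw [hC]
      refine setIntegral_mono_set hint ?_ (lowerBox_subset_Icc ht).eventuallyLE
      exact (ae_restrict_mem measurableSet_Icc).mono fun z hz => hψ0 z hz
    simp only [a]
    rw [one_div, inv_mul_le_iff₀ hCpos, mul_one]; exact this
  haveI : ∀ c : (Fin d → Fin m) × Fin m,
      IsProbabilityMeasure (ProbabilityTheory.cond volume (gridCubeP c)) := fun c => isProb_cond c
  let S : (Fin d → Fin (K + 1)) → Finset ((Fin d → Fin m) × Fin m) :=
    fun k => (bdry m A ∪ cutc m A (τ k)).toFinite.toFinset
  have hS : ∀ k, ((S k).card : ℝ) ≤ 6 * Real.sqrt (d + 1) * MA * (m : ℝ) ^ d := by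
    intro k
    refine le_trans ?_ b1
    simp only [S]
    rw [← Set.ncard_eq_toFinset_card]
    exact_mod_cast card_bad_le hd A hAI (τ k)
  obtain ⟨x, hxQ, hxk⟩ := hoeff_exists
    (fun c : (Fin d → Fin m) × Fin m => ProbabilityTheory.cond volume (gridCubeP c))
    (fun c => gridCubeP c)
    (fun c => ProbabilityTheory.ae_cond_mem (measurableSet_gridCubeP c))
    (fun k => ftest A (τ k) (a (τ k))) (fun k => measurable_ftest hA _ _) (fun k => - a (τ k))
    (fun k z => ftest_mem A _ _ (ha0 _ (hτ k)) (ha1 _ (hτ k)) z) S _ hS r hr0 (by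
      have := union_bound hd hm2 b5 MA hMApos r hr
      simpa [hK] using this)
  refine ⟨x, hxQ, ?_⟩
  have hD : ∀ k, |∑ c, ftest A (τ k) (a (τ k)) (x c)| < r := by
    intro k
    have h0 := sum_mean (m := m) hm (ftest A (τ k) (a (τ k)))
      (integrableOn_ftest hA _ _ (ha0 _ (hτ k)) (ha1 _ (hτ k)))
      (integral_ftest L hL ψ hmeas hψ0 hψL (τ k) (hτ k) C hC hCpos)
    have h1 : ∑ c ∈ S k, (ftest A (τ k) (a (τ k)) (x c) -
        ∫ z, ftest A (τ k) (a (τ k)) z ∂(ProbabilityTheory.cond volume (gridCubeP c))) =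
        ∑ c, (ftest A (τ k) (a (τ k)) (x c) -
        ∫ z, ftest A (τ k) (a (τ k)) z ∂(ProbabilityTheory.cond volume (gridCubeP c))) := by
      refine Finset.sum_subset (Finset.subset_univ _) fun c _ hc => ?_
      have hc' : c ∉ bdry m A ∪ cutc m A (τ k) := by simpa [S] using hc
      rw [mean_const _ c (x c) (fun z hz => ftest_const A _ _ c hc' z (x c) hz (hxQ c)), sub_self]
    have h2 := hxk k
    rw [h1, Finset.sum_sub_distrib, h0, sub_zero] at h2
    exact h2
  intro N hN y e hy t ht
  have hNlow := N_lower hm L hL ψ hmeas hψ0 hψL C hC x hxQ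
  rw [← hAdef, ← hN] at hNlow
  have hNs : (N : ℝ) = ∑ c, A.indicator (fun _ => (1 : ℝ)) (x c) := by
    rw [← sum_subtype_conv A x (fun _ => 1) N e]; simp
  have hNup : (N : ℝ) ≤ (m : ℝ) ^ (d + 1) := by
    rw [hNs]
    calc _ ≤ ∑ c : (Fin d → Fin m) × Fin m, (1 : ℝ) :=
          Finset.sum_le_sum fun c _ => Set.indicator_le_self' (fun _ _ => zero_le_one) _
      _ = _ := by simp [pow_succ]
  have hconv : ∀ u : Fin d → ℝ, ∑ c, ftest A u (a u) (x c) =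
      ∑ j, (lowerBox u).indicator (fun _ => (1 : ℝ)) (y j) - a u * N := by
    intro u
    have h1 := sum_subtype_conv A x
      (fun z => (lowerBox u).indicator (fun _ => (1 : ℝ)) z.1 - a u) N e
    simp only [ftest]
    rw [← h1, Finset.sum_sub_distrib]
    simp only [hy]
    simp [mul_comm]
  have hpass := net_pass hm L hL ψ hmeas hψ0 hψL C hCpos hNup y r
    (fun k => by have := hD k; rw [hconv] at this; exact this) t ht
  have hN1 : (m : ℝ) ^ (d + 1) ≤ 2 * L / C * N := by
    have h1 : (m : ℝ) ^ (d + 1) * (C / L) ≤ N + 6 * Real.sqrt (d + 1) * MA * (m : ℝ) ^ d :=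
      hNlow.trans (by linarith)
    rw [div_le_iff₀ hCpos] at b2
    have h2 : 6 * Real.sqrt (d + 1) * MA * (m : ℝ) ^ d ≤ (m : ℝ) ^ (d + 1) * (C / L) / 2 := by
      have h3 : 6 * Real.sqrt (d + 1) * MA ≤ m * (C / L) / 2 := by
        rw [mul_div_assoc', div_div, le_div_iff₀ (by positivity)]
        linarith
      calc _ ≤ (m * (C / L) / 2) * (m : ℝ) ^ d := by gcongr
        _ = _ := by ring
    have h4 : (m : ℝ) ^ (d + 1) * (C / L) ≤ 2 * N := by linarith
    rw [mul_div_assoc', div_le_iff₀ hL] at h4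
    rw [div_mul_eq_mul_div, le_div_iff₀ hCpos]
    linarith
  have hN2 : (m : ℝ) ^ d ≤ N := by
    have h1 : 2 * L / C * (m : ℝ) ^ d ≤ 2 * L / C * N := by
      refine le_trans ?_ hN1
      rw [pow_succ']; gcongr
    exact le_of_mul_le_mul_left h1 (by positivity)
  have hNpos : (0 : ℝ) < N := lt_of_lt_of_le (by positivity) hN2
  have hfin := final_const (d := d) (m := m) (N := N) hm2 L C MA hL hCpos hMApos hN1 hN2
  have herr : L * d / (C * m) ≤ 2 * C / L := by
    rw [div_le_iff₀ (by positivity)] at b4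
    rw [div_le_div_iff₀ (by positivity) hL]
    nlinarith
  have heq : (1 / (N : ℝ)) * ∑ k, (lowerBox t).indicator (fun _ => (1 : ℝ)) (y k)
      - (1 / C) * ∫ z in lowerBox t, ψ z =
      (∑ j, (lowerBox t).indicator (fun _ => (1 : ℝ)) (y j)
        - (1 / C * ∫ z in lowerBox t, ψ z) * N) / N := by
    field_simp
  rw [heq, abs_div, abs_of_pos hNpos]
  calc _ ≤ (r + 2 * C / L) / N := by gcongr; linarith
    _ = r / N + 2 * C / (L * N) := by rw [add_div, div_div]
    _ ≤ _ := by gcongr
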